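/- Let q ∈ ℂ be a primitive sixth root of unity. Define c(n) := 3^{n(n−2)/4}·∏_{i=0}^{n−1}⌊i/2⌋!/i! if n is even, and c(n) := 3^{(n−1)²/4}·∏_{i=0}^{n−1}⌊i/2⌋!/i! if n is odd. Then for every integer k and all positive integers n the following identities hold in ℂ[x]: (1) d_{2n+1,3k}(x,q) = 0; (2) d_{2n,3k}(x,q) = (−1)^n·q^{−n}·c(2n)·∏_{i=0}^{n−1}(x+1+3i)·∏_{i=1}^{n−1}(x+3i)_{2(n−i)}; (3) d_{n,3k+1}(x,q) = c(n)·∏_{i=0}^{⌊(n−2)/2⌋}(x+2+3i)_{n−1−2i}; (4) d_{n,3k+2}(x,q) = q^{−n}·d_{n,3k+1}(x,q). -/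

import Mathlib

open Polynomial Finset

noncomputable section

/-- The polynomial binomial coefficient binom(y, m) = y(y-1)⋯(y-m+1)/m! over a field F. -/
noncomputable def binomP (F : Type*) [Field F] (y : Polynomial F) (m : ℕ) : Polynomial F :=
  Polynomial.C ((m.factorial : F))⁻¹ * ∏ t ∈ Finset.range m, (y - (t : Polynomial F))

/-- a_m(q) for a numeric value q in a field: a_m = ∑_{l=0}^{m-1}(-q)^l for m > 0, a_0 = 0,
a_m = -∑_{l=1}^{-m}(-q)^{-l} for m < 0. -/
noncomputable def aF (F : Type*) [Field F] (q : F) (m : ℤ) : F :=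
  if 0 < m then ∑ l ∈ Finset.range m.toNat, (-q) ^ l
  else -∑ l ∈ Finset.range (-m).toNat, (-q) ^ (-(l + 1 : ℤ))

/-- d_{n,k}(x,q) ∈ F[x] for a numeric value q:
the determinant of the matrix with (1-based) (i,j) entry binom(x+i+j-2, j-1)·a_{j-i+k}(q). -/
noncomputable def dF (F : Type*) [Field F] (n : ℕ) (k : ℤ) (q : F) : Polynomial F :=
  Matrix.det (Matrix.of fun i j : Fin n =>
    binomP F (Polynomial.X + ((i : ℕ) : Polynomial F) + ((j : ℕ) : Polynomial F)) (j : ℕ) *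
      Polynomial.C (aF F q ((j : ℤ) - (i : ℤ) + k)))

/-- The Pochhammer symbol (y)_m = y(y+1)⋯(y+m-1) for m > 0, and (y)_m = 1 for m ≤ 0. -/
noncomputable def poch (y : Polynomial ℂ) (m : ℤ) : Polynomial ℂ :=
  ∏ t ∈ Finset.range m.toNat, (y + (t : Polynomial ℂ))

/-- c(n) = 3^{n(n-2)/4}·∏_{i=0}^{n-1}⌊i/2⌋!/i! for even n, and
c(n) = 3^{(n-1)²/4}·∏_{i=0}^{n-1}⌊i/2⌋!/i! for odd n. -/
noncomputable def cConst (n : ℕ) : ℂ :=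
  if Even n then
    (3 : ℂ) ^ (n * (n - 2) / 4) * ∏ i ∈ Finset.range n, ((i / 2).factorial : ℂ) / (i.factorial : ℂ)
  else
    (3 : ℂ) ^ ((n - 1) ^ 2 / 4) * ∏ i ∈ Finset.range n, ((i / 2).factorial : ℂ) / (i.factorial : ℂ)

/-- Bordering an invertible matrix by one row and one column. -/
theorem det_border {F : Type*} [Field F] {n : ℕ} (D : Matrix (Fin n) (Fin n) F)
    (hD : IsUnit D.det) (a : F) (u v : Fin n → F) :
    (Matrix.fromBlocks (Matrix.of fun _ _ : Unit => a) (Matrix.of fun _ j => u j)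
      (Matrix.of fun i _ => v i) D).det = D.det * (a - u ⬝ᵥ (D⁻¹.mulVec v)) := by
  let _ := D.invertibleOfIsUnitDet hD
  rw [Matrix.det_fromBlocks₂₂, Matrix.invOf_eq_nonsing_inv, Matrix.det_unique (n := Unit), Matrix.mul_assoc]
  rfl

/-- Bordering an invertible matrix by two rows and two columns. -/
theorem det_border_two {F : Type*} [Field F] {n : ℕ} (D : Matrix (Fin n) (Fin n) F)
    (hD : IsUnit D.det) (a : Fin 2 → Fin 2 → F) (u v : Fin 2 → Fin n → F) :
    (Matrix.fromBlocks (Matrix.of a) (Matrix.of u) (Matrix.of fun i b => v b i) D).det * D.det =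
      (D.det * (a 0 0 - u 0 ⬝ᵥ (D⁻¹.mulVec (v 0)))) *
          (D.det * (a 1 1 - u 1 ⬝ᵥ (D⁻¹.mulVec (v 1)))) -
        (D.det * (a 0 1 - u 0 ⬝ᵥ (D⁻¹.mulVec (v 1)))) *
          (D.det * (a 1 0 - u 1 ⬝ᵥ (D⁻¹.mulVec (v 0)))) := by
  let _ := D.invertibleOfIsUnitDet hD
  have h (i j : Fin 2) : (Matrix.of a - Matrix.of u * D⁻¹ * Matrix.of fun i b => v b i) i j =
      a i j - u i ⬝ᵥ (D⁻¹.mulVec (v j)) := by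
    rw [Matrix.mul_assoc]; rfl
  rw [Matrix.det_fromBlocks₂₂, Matrix.invOf_eq_nonsing_inv, Matrix.det_fin_two]
  simp only [h]
  ring

/-- The index `p` of `Fin (n + 1)` split off from the remaining ones. -/
def splitIndex {n : ℕ} (p : Fin (n + 1)) : Unit ⊕ Fin n ≃ Fin (n + 1) :=
  (((finSuccEquiv' p).trans (Equiv.optionEquivSumPUnit _)).trans (Equiv.sumComm _ _)).symm

/-- The first and the last index of `Fin (n + 2)` split off from the interior ones. -/
def splitEnds (n : ℕ) : Fin 2 ⊕ Fin n ≃ Fin (n + 2) :=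
  Equiv.ofBijective (Sum.elim ![0, Fin.last _] fun i => i.succ.castSucc) <| by
    rw [Fintype.bijective_iff_injective_and_card]
    refine ⟨?_, by simp [add_comm]⟩
    rintro (i | i) (j | j) h
    · fin_cases i <;> fin_cases j <;> simp_all [Fin.ext_iff]
    · fin_cases i <;> simp_all [Fin.ext_iff]; omega
    · fin_cases j <;> simp_all [Fin.ext_iff]; omega
    · simpa using h

theorem det_submatrix_equivs_mul {R m n : Type*} [CommRing R] [Fintype m] [DecidableEq m]
    [Fintype n] [DecidableEq n] (e f : n ≃ m) (A B : Matrix m m R) :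
    (A.submatrix e f).det * (B.submatrix f e).det = A.det * B.det := by
  have hA : A.submatrix e f = (A.submatrix e e).submatrix id (f.trans e.symm) := by
    ext; simp
  have hB : B.submatrix f e = (B.submatrix e e).submatrix (f.trans e.symm) id := by
    ext; simp
  rw [hA, hB, Matrix.det_permute', Matrix.det_permute, Matrix.det_submatrix_equiv_self,
    Matrix.det_submatrix_equiv_self]
  rcases Int.units_eq_one_or (Equiv.Perm.sign (f.trans e.symm)) with h | h <;> simp [h]

/-- The Desnanot–Jacobi identity, for contiguous minors of an infinite array whose
interior minor does not vanish. -/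
theorem desnanot_jacobi {F : Type*} [Field F] (M : ℕ → ℕ → F) (n : ℕ)
    (h : (Matrix.of fun i j : Fin n => M (i + 1) (j + 1)).det ≠ 0) :
    (Matrix.of fun i j : Fin (n + 2) => M i j).det *
        (Matrix.of fun i j : Fin n => M (i + 1) (j + 1)).det =
      (Matrix.of fun i j : Fin (n + 1) => M i j).det *
          (Matrix.of fun i j : Fin (n + 1) => M (i + 1) (j + 1)).det -
        (Matrix.of fun i j : Fin (n + 1) => M i (j + 1)).det *
          (Matrix.of fun i j : Fin (n + 1) => M (i + 1) j).det := by
  set D := Matrix.of fun i j : Fin n => M (i + 1) (j + 1) with hD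
  have hu : IsUnit D.det := isUnit_iff_ne_zero.mpr h
  have key := det_border_two D hu (fun a b => M (![0, n + 1] a) (![0, n + 1] b))
    (fun a j => M (![0, n + 1] a) (j + 1)) (fun b i => M (i + 1) (![0, n + 1] b))
  simp only [← det_border D hu] at key
  rw [← Matrix.det_submatrix_equiv_self (splitEnds n),
    ← Matrix.det_submatrix_equiv_self (splitIndex 0) (Matrix.of fun i j : Fin (n + 1) => M i j),
    ← Matrix.det_submatrix_equiv_self (splitIndex (Fin.last n))
      (Matrix.of fun i j : Fin (n + 1) => M (i + 1) (j + 1)),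
    ← det_submatrix_equivs_mul (splitIndex 0) (splitIndex (Fin.last n))]
  convert key using 3
  · ext (a | i) (b | j)
    · fin_cases a <;> fin_cases b <;> simp [splitEnds]
    · fin_cases a <;> simp [splitEnds]
    · fin_cases b <;> simp [splitEnds]
    · simp [splitEnds, hD]
  all_goals
    congr 1
    ext (a | i) (b | j) <;> simp [splitIndex, hD]

/-- The determinant `d_{n,k}` at a natural number `x`, for an arbitrary sequence `α`. -/
def binomDet (α : ℤ → ℂ) (n : ℕ) (k : ℤ) (x : ℕ) : ℂ :=
  (Matrix.of fun i j : Fin n => ((x + i + j).choose j : ℂ) * α ((j : ℤ) - i + k)).det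

/-- The determinant `binomDet` with the denominators of its rows and columns cleared. -/
def factorialDet (α : ℤ → ℂ) (n : ℕ) (k : ℤ) (x : ℕ) : ℂ :=
  (Matrix.of fun i j : Fin n => ((x + i + j).factorial : ℂ) * α ((j : ℤ) - i + k)).det

/-- The common denominator of the rows and columns of `binomDet`. -/
def factorialWeight (n x : ℕ) : ℂ :=
  ∏ j ∈ range n, ((j.factorial : ℂ) * ((x + j).factorial : ℂ))

theorem factorialWeight_ne_zero (n x : ℕ) : factorialWeight n x ≠ 0 :=
  prod_ne_zero_iff.mpr fun j _ =>
    mul_ne_zero (mod_cast j.factorial_ne_zero) (mod_cast (x + j).factorial_ne_zero)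

theorem factorialWeight_succ (n x : ℕ) : factorialWeight (n + 1) x =
    factorialWeight n x * ((n.factorial : ℂ) * ((x + n).factorial : ℂ)) :=
  prod_range_succ _ _

theorem factorialDet_eq (α : ℤ → ℂ) (n : ℕ) (k : ℤ) (x : ℕ) :
    factorialDet α n k x = factorialWeight n x * binomDet α n k x := by
  have h : (Matrix.of fun i j : Fin n => ((x + i + j).factorial : ℂ) * α ((j : ℤ) - i + k)) =
      Matrix.of fun i j : Fin n => ((j : ℕ).factorial : ℂ) *
        (Matrix.of fun i j : Fin n => ((x + i).factorial : ℂ) *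
          (Matrix.of fun i j : Fin n =>
            ((x + i + j).choose j : ℂ) * α ((j : ℤ) - i + k)) i j) i j := by
    ext i j
    have := Nat.add_choose_mul_factorial_mul_factorial (x + i) j
    simp only [Matrix.of_apply]
    rw [← this]
    push_cast
    ring
  rw [factorialDet, h, Matrix.det_mul_row, Matrix.det_mul_column, binomDet, factorialWeight,
    prod_mul_distrib, prod_range, prod_range, mul_assoc]

theorem factorialWeight_shift_sq (n x : ℕ) :
    factorialWeight n (x + 1) ^ 2 * (x + n + 1) =
      (x + 1) * (factorialWeight n x * factorialWeight n (x + 2)) := by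
  induction n with
  | zero => simp [factorialWeight]
  | succ n ih =>
    have h1 : (x + 1 + n).factorial = (x + n + 1) * (x + n).factorial := by
      rw [show x + 1 + n = x + n + 1 by ring, Nat.factorial_succ]
    have h2 : (x + 2 + n).factorial = (x + n + 2) * ((x + n + 1) * (x + n).factorial) := by
      rw [show x + 2 + n = x + n + 1 + 1 by ring, Nat.factorial_succ, Nat.factorial_succ]
    simp only [factorialWeight_succ, h1, h2]
    push_cast
    linear_combination ((n.factorial : ℂ) ^ 2 * ((x + n).factorial : ℂ) ^ 2 *
      (x + n + 1) * (x + n + 2)) * ih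

theorem factorialDet_condensation (α : ℤ → ℂ) (n : ℕ) (k : ℤ) (x : ℕ)
    (h : factorialDet α n k (x + 2) ≠ 0) :
    factorialDet α (n + 2) k x * factorialDet α n k (x + 2) =
      factorialDet α (n + 1) k x * factorialDet α (n + 1) k (x + 2) -
        factorialDet α (n + 1) (k + 1) (x + 1) * factorialDet α (n + 1) (k - 1) (x + 1) := by
  set M : ℕ → ℕ → ℂ := fun i j => ((x + i + j).factorial : ℂ) * α ((j : ℤ) - i + k) with hM
  have h11 (m : ℕ) : factorialDet α m k (x + 2) =
      (Matrix.of fun i j : Fin m => M (i + 1) (j + 1)).det := by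
    simp only [factorialDet, hM]
    congr; ext i j; congr 2
    · congr 1; ring
    · push_cast; ring
  have h01 (m : ℕ) : factorialDet α m (k + 1) (x + 1) =
      (Matrix.of fun i j : Fin m => M i (j + 1)).det := by
    simp only [factorialDet, hM]
    congr; ext i j; congr 2
    · congr 1; ring
    · push_cast; ring
  have h10 (m : ℕ) : factorialDet α m (k - 1) (x + 1) =
      (Matrix.of fun i j : Fin m => M (i + 1) j).det := by
    simp only [factorialDet, hM]
    congr; ext i j; congr 2
    · congr 1; ring
    · push_cast; ring
  rw [h11] at h
  rw [h11, h11, h01, h10]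
  exact desnanot_jacobi M n h

theorem binomDet_condensation (α : ℤ → ℂ) (n : ℕ) (k : ℤ) (x : ℕ)
    (h : binomDet α n k (x + 2) ≠ 0) :
    (n + 1) * (binomDet α (n + 2) k x * binomDet α n k (x + 2)) =
      (x + n + 2) * (binomDet α (n + 1) k x * binomDet α (n + 1) k (x + 2)) -
        (x + 1) * (binomDet α (n + 1) (k + 1) (x + 1) * binomDet α (n + 1) (k - 1) (x + 1)) := by
  have key := factorialDet_condensation α n k x
    (by rw [factorialDet_eq]; exact mul_ne_zero (factorialWeight_ne_zero _ _) h)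
  simp only [factorialDet_eq] at key
  have hw : factorialWeight (n + 2) x * factorialWeight n (x + 2) * (x + n + 2) =
      (n + 1) * (factorialWeight (n + 1) x * factorialWeight (n + 1) (x + 2)) := by
    rw [factorialWeight_succ (n + 1) x, factorialWeight_succ n (x + 2),
      show x + 2 + n = x + (n + 1) + 1 by ring, Nat.factorial_succ (x + (n + 1)),
      Nat.factorial_succ n]
    push_cast
    ring
  have hs := factorialWeight_shift_sq (n + 1) x
  push_cast at hs
  refine mul_left_cancel₀ (mul_ne_zero (factorialWeight_ne_zero (n + 1) x)
    (factorialWeight_ne_zero (n + 1) (x + 2))) ?_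
  linear_combination (x + n + 2 : ℂ) * key -
    (binomDet α (n + 2) k x * binomDet α n k (x + 2)) * hw -
    (binomDet α (n + 1) (k + 1) (x + 1) * binomDet α (n + 1) (k - 1) (x + 1)) * hs

theorem binomDet_neg {α : ℤ → ℂ} {w : ℂ} (hw : w ≠ 0) (hα : ∀ m, α (-m) = -(w ^ (-m) * α m))
    (n : ℕ) (k : ℤ) (x : ℕ) :
    binomDet α n (-k) x = (-w ^ (-k)) ^ n * binomDet α n k x := by
  refine mul_left_cancel₀ (factorialWeight_ne_zero n x) ?_
  rw [mul_left_comm, ← factorialDet_eq, ← factorialDet_eq, factorialDet, ← Matrix.det_transpose]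
  have h : (Matrix.of fun i j : Fin n =>
      ((x + i + j).factorial : ℂ) * α ((j : ℤ) - i + -k)).transpose =
      Matrix.of fun i j : Fin n => w ^ (-(j : ℤ)) *
        (Matrix.of fun i j : Fin n => w ^ (i : ℤ) *
          ((-w ^ (-k)) • Matrix.of fun i j : Fin n =>
            ((x + i + j).factorial : ℂ) * α ((j : ℤ) - i + k)) i j) i j := by
    ext i j
    simp only [Matrix.of_apply, Matrix.transpose_apply, Matrix.smul_apply, smul_eq_mul]
    rw [show (i : ℤ) - j + -k = -((j : ℤ) - i + k) by ring, hα,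
      show -((j : ℤ) - i + k) = -(j : ℤ) + i + -k by ring, zpow_add₀ hw, zpow_add₀ hw,
      show x + (j : ℕ) + i = x + i + j by ring]
    ring
  rw [h, Matrix.det_mul_row, Matrix.det_mul_column, Matrix.det_smul, Fintype.card_fin,
    ← factorialDet, ← mul_assoc, ← prod_mul_distrib]
  simp [hw]

theorem binomDet_odd_zero {α : ℤ → ℂ} {w : ℂ} (hw : w ≠ 0)
    (hα : ∀ m, α (-m) = -(w ^ (-m) * α m)) (m x : ℕ) : binomDet α (2 * m + 1) 0 x = 0 := by
  have h := binomDet_neg hw hα (2 * m + 1) 0 x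
  simp only [neg_zero, zpow_zero, pow_succ, pow_mul] at h
  linear_combination h / 2

/-- The product `∏ (x+2+3i)_{n-1-2i}` of the evaluation of `d_{n,3k+1}`. -/
def pochProd (n : ℕ) (x : ℂ) : ℂ :=
  ∏ i ∈ range (n / 2), ∏ t ∈ range (n - 1 - 2 * i), (x + 2 + 3 * i + t)

theorem pochProd_odd (m : ℕ) (x : ℂ) : pochProd (2 * m + 1) x =
    ∏ i ∈ range m, ∏ t ∈ range (2 * (m - i)), (x + 2 + 3 * i + t) := by
  rw [pochProd, show (2 * m + 1) / 2 = m by omega]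
  refine prod_congr rfl fun i _ => ?_
  rw [show 2 * m + 1 - 1 - 2 * i = 2 * (m - i) by omega]

theorem pochProd_odd' (m : ℕ) (x : ℂ) : pochProd (2 * m + 1) x =
    ∏ i ∈ range (m + 1), ∏ t ∈ range (2 * (m - i)), (x + 2 + 3 * i + t) := by
  rw [pochProd_odd, prod_range_succ]
  simp

theorem pochProd_even_succ (m : ℕ) (x : ℂ) : pochProd (2 * m + 2) x =
    pochProd (2 * m + 1) x * ∏ i ∈ range (m + 1), (x + 2 * m + 2 + i) := by
  rw [pochProd_odd', pochProd, show (2 * m + 2) / 2 = m + 1 by omega, ← prod_mul_distrib]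
  refine prod_congr rfl fun i hi => ?_
  obtain ⟨j, rfl⟩ := Nat.exists_eq_add_of_le (Nat.lt_succ_iff.mp (mem_range.mp hi))
  rw [show 2 * (i + j) + 2 - 1 - 2 * i = 2 * j + 1 by omega,
    show 2 * (i + j - i) = 2 * j by omega, prod_range_succ]
  push_cast
  ring

theorem pochProd_odd_eq_even (m : ℕ) (x : ℂ) : pochProd (2 * m + 1) x =
    pochProd (2 * m) x * ∏ i ∈ range m, (x + 2 * m + 1 + i) := by
  rw [pochProd_odd, pochProd, show 2 * m / 2 = m by omega, ← prod_mul_distrib]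
  refine prod_congr rfl fun i hi => ?_
  obtain ⟨j, rfl⟩ := Nat.exists_eq_add_of_lt (mem_range.mp hi)
  rw [show 2 * (i + j + 1) - 1 - 2 * i = 2 * j + 1 by omega,
    show 2 * (i + j + 1 - i) = 2 * j + 1 + 1 by omega, prod_range_succ _ (2 * j + 1)]
  push_cast
  ring

theorem pochProd_odd_shift (m : ℕ) (x : ℂ) : pochProd (2 * (m + 1) + 1) x =
    pochProd (2 * m + 1) (x + 2) *
      ∏ i ∈ range (m + 1), ((x + 2 + 3 * i) * (x + 3 + 3 * i)) := by
  rw [pochProd_odd, pochProd_odd', ← prod_mul_distrib]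
  refine prod_congr rfl fun i hi => ?_
  obtain ⟨j, rfl⟩ := Nat.exists_eq_add_of_le (Nat.lt_succ_iff.mp (mem_range.mp hi))
  rw [show 2 * (i + j + 1 - i) = 2 * j + 1 + 1 by omega,
    show 2 * (i + j - i) = 2 * j by omega, prod_range_succ', prod_range_succ', mul_assoc]
  congr 1
  · refine prod_congr rfl fun t _ => ?_
    push_cast
    ring
  · push_cast
    ring

theorem pochProd_even_shift (m : ℕ) (x : ℂ) :
    pochProd (2 * m) x * ∏ i ∈ range m, (x + 2 * m + 1 + i) =
      pochProd (2 * m) (x + 1) * ∏ i ∈ range m, (x + 2 + 3 * i) := by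
  rw [← pochProd_odd_eq_even, pochProd_odd, pochProd, show 2 * m / 2 = m by omega,
    ← prod_mul_distrib]
  refine prod_congr rfl fun i hi => ?_
  obtain ⟨j, rfl⟩ := Nat.exists_eq_add_of_lt (mem_range.mp hi)
  rw [show 2 * (i + j + 1) - 1 - 2 * i = 2 * j + 1 by omega,
    show 2 * (i + j + 1 - i) = 2 * j + 1 + 1 by omega, prod_range_succ']
  congr 1
  · refine prod_congr rfl fun t _ => ?_
    push_cast
    ring
  · push_cast
    ring

theorem pochProd_ne_zero (n x : ℕ) : pochProd n x ≠ 0 :=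
  prod_ne_zero_iff.mpr fun i _ => prod_ne_zero_iff.mpr fun t _ => by
    exact_mod_cast (by omega : x + 2 + 3 * i + t ≠ 0)

theorem cConst_ne_zero (n : ℕ) : cConst n ≠ 0 := by
  have h : ∏ i ∈ range n, ((i / 2).factorial : ℂ) / (i.factorial : ℂ) ≠ 0 :=
    prod_ne_zero_iff.mpr fun i _ => div_ne_zero (mod_cast Nat.factorial_ne_zero _)
      (mod_cast Nat.factorial_ne_zero _)
  rw [cConst]
  split_ifs <;> exact mul_ne_zero (pow_ne_zero _ (by norm_num)) h

theorem cConst_odd (m : ℕ) : cConst (2 * m + 1) = 3 ^ (m * m) *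
    ∏ i ∈ range (2 * m + 1), ((i / 2).factorial : ℂ) / (i.factorial : ℂ) := by
  rw [cConst, if_neg (by simp [parity_simps])]
  congr 2
  rw [show 2 * m + 1 - 1 = 2 * m by omega, show (2 * m) ^ 2 = m * m * 4 by ring]
  simp

theorem cConst_even_succ (m : ℕ) : cConst (2 * m + 2) = 3 ^ ((m + 1) * m) *
    ∏ i ∈ range (2 * m + 2), ((i / 2).factorial : ℂ) / (i.factorial : ℂ) := by
  rw [cConst, if_pos (by simp [parity_simps])]
  congr 2
  rw [show 2 * m + 2 - 2 = 2 * m by omega,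
    show (2 * m + 2) * (2 * m) = (m + 1) * m * 4 by ring]
  simp

theorem cConst_even_succ_mul (m : ℕ) :
    cConst (2 * m + 2) * ((2 * m + 1).factorial : ℂ) =
      cConst (2 * m + 1) * (3 ^ m * (m.factorial : ℂ)) := by
  have := (2 * m + 1).factorial_ne_zero
  rw [cConst_even_succ, cConst_odd, prod_range_succ _ (2 * m + 1),
    show (2 * m + 1) / 2 = m by omega]
  field_simp
  ring

theorem cConst_odd_mul (m : ℕ) :
    cConst (2 * m + 1) * ((2 * m).factorial : ℂ) =
      cConst (2 * m) * (3 ^ m * (m.factorial : ℂ)) := by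
  cases m with
  | zero => simp [cConst]
  | succ m =>
    have := (2 * m + 2).factorial_ne_zero
    rw [cConst_odd, show 2 * (m + 1) = 2 * m + 2 by ring, cConst_even_succ,
      prod_range_succ _ (2 * m + 2), show (2 * m + 2) / 2 = m + 1 by omega]
    field_simp
    ring

/-- The product of the evaluation of `d_{2m,3k}`. -/
def evenProd (m : ℕ) (x : ℂ) : ℂ :=
  (∏ i ∈ range m, (x + 1 + 3 * i)) *
    ∏ i ∈ range (m - 1), ∏ t ∈ range (2 * (m - 1 - i)), (x + 3 * (i + 1) + t)

theorem evenProd_succ (m : ℕ) (x : ℂ) : evenProd (m + 1) x =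
    pochProd (2 * m + 1) (x + 1) * ∏ i ∈ range (m + 1), (x + 1 + 3 * i) := by
  rw [evenProd, pochProd_odd, mul_comm]
  congr 1
  refine prod_congr rfl fun i _ => prod_congr rfl fun t _ => ?_
  ring

theorem evenProd_ne_zero (m x : ℕ) : evenProd m x ≠ 0 :=
  mul_ne_zero
    (prod_ne_zero_iff.mpr fun i _ => by exact_mod_cast (by omega : x + 1 + 3 * i ≠ 0))
    (prod_ne_zero_iff.mpr fun i _ => prod_ne_zero_iff.mpr fun t _ => by
      exact_mod_cast (by omega : x + 3 * (i + 1) + t ≠ 0))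

/-- The closed form of `d_{n,3k+1}`. -/
def oneValue (n : ℕ) (x : ℂ) : ℂ := cConst n * pochProd n x

/-- The closed form of `d_{2m,3k}`, up to its power of `-q⁻¹`. -/
def zeroValue (m : ℕ) (x : ℂ) : ℂ := cConst (2 * m) * evenProd m x

theorem oneValue_ne_zero (n x : ℕ) : oneValue n x ≠ 0 :=
  mul_ne_zero (cConst_ne_zero n) (pochProd_ne_zero n x)

theorem zeroValue_ne_zero (m x : ℕ) : zeroValue m x ≠ 0 :=
  mul_ne_zero (cConst_ne_zero _) (evenProd_ne_zero m x)

theorem oneValue_even_condensation (m : ℕ) (x : ℂ) :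
    (2 * m + 1) * (oneValue (2 * m + 2) x * oneValue (2 * m) (x + 2)) =
      (x + (2 * m + 2)) * (oneValue (2 * m + 1) x * oneValue (2 * m + 1) (x + 2)) := by
  have hf : ((2 * m).factorial : ℂ) ≠ 0 := mod_cast Nat.factorial_ne_zero _
  have h1 := cConst_even_succ_mul m
  have h2 := cConst_odd_mul m
  rw [Nat.factorial_succ] at h1
  push_cast at h1
  have hp : ∏ i ∈ range (m + 1), (x + 2 * m + 2 + i) =
      (∏ i ∈ range m, (x + 2 + 2 * m + 1 + i)) * (x + (2 * m + 2)) := by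
    rw [prod_range_succ']
    congr 1
    · refine prod_congr rfl fun t _ => ?_
      push_cast
      ring
    · push_cast
      ring
  simp only [oneValue]
  rw [pochProd_even_succ, pochProd_odd_eq_even m (x + 2), hp]
  refine mul_left_cancel₀ hf ?_
  linear_combination (pochProd (2 * m + 1) x * pochProd (2 * m) (x + 2) *
    (∏ i ∈ range m, (x + 2 + 2 * m + 1 + i)) * (x + (2 * m + 2))) *
    (cConst (2 * m) * h1 - cConst (2 * m + 1) * h2)

theorem zeroValue_succ_mul (m : ℕ) (x : ℂ) :
    zeroValue (m + 1) x * ((2 * m + 1).factorial : ℂ) =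
      oneValue (2 * m + 1) (x + 1) * (3 ^ m * (m.factorial : ℂ)) *
        ∏ i ∈ range (m + 1), (x + 1 + 3 * i) := by
  rw [zeroValue, oneValue, evenProd_succ, show 2 * (m + 1) = 2 * m + 2 by ring]
  linear_combination pochProd (2 * m + 1) (x + 1) * (∏ i ∈ range (m + 1), (x + 1 + 3 * i)) *
    cConst_even_succ_mul m

theorem oneValue_odd_eq_zeroValue (m : ℕ) (x : ℂ) :
    oneValue (2 * m + 1) x * ((2 * m).factorial : ℂ) =
      zeroValue m (x + 1) * (3 ^ m * (m.factorial : ℂ)) * ∏ i ∈ range m, (x + 3 + 3 * i) := by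
  have h : pochProd (2 * m + 1) x = evenProd m (x + 1) * ∏ i ∈ range m, (x + 3 + 3 * i) := by
    cases m with
    | zero => simp [pochProd, evenProd]
    | succ m =>
      rw [pochProd_odd_shift, evenProd_succ, prod_mul_distrib]
      ring_nf
  rw [oneValue, zeroValue, h]
  linear_combination evenProd m (x + 1) * (∏ i ∈ range m, (x + 3 + 3 * i)) * cConst_odd_mul m

theorem zeroValue_condensation (m : ℕ) (x : ℂ) :
    (2 * m + 1) * (zeroValue (m + 1) x * zeroValue m (x + 2)) =
      (x + 1) * oneValue (2 * m + 1) (x + 1) ^ 2 := by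
  have hf : ((2 * m).factorial : ℂ) ≠ 0 := mod_cast Nat.factorial_ne_zero _
  have h1 := zeroValue_succ_mul m x
  have h2 := oneValue_odd_eq_zeroValue m (x + 1)
  rw [prod_range_succ', Nat.factorial_succ] at h1
  have hp : ∏ i ∈ range m, (x + 1 + 3 * ((i + 1 : ℕ) : ℂ)) =
      ∏ i ∈ range m, (x + 1 + 3 + 3 * (i : ℂ)) :=
    prod_congr rfl fun t _ => by push_cast; ring
  rw [hp] at h1
  rw [show x + 1 + 1 = x + 2 by ring] at h2
  push_cast at h1
  refine mul_left_cancel₀ hf ?_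
  linear_combination zeroValue m (x + 2) * h1 - (x + 1) * oneValue (2 * m + 1) (x + 1) * h2

theorem oneValue_odd_condensation (m : ℕ) (x : ℂ) :
    (2 * m + 2) * (oneValue (2 * m + 3) x * oneValue (2 * m + 1) (x + 2)) =
      (x + (2 * m + 3)) * (oneValue (2 * m + 2) x * oneValue (2 * m + 2) (x + 2)) -
        (x + 1) * (zeroValue (m + 1) (x + 1) * oneValue (2 * m + 2) (x + 1)) := by
  have hf : ((2 * m + 1).factorial : ℂ) ≠ 0 := mod_cast Nat.factorial_ne_zero _
  have h1 := zeroValue_succ_mul m (x + 1)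
  have h2 : oneValue (2 * m + 2) (x + 2) * ((2 * m + 1).factorial : ℂ) =
      oneValue (2 * m + 1) (x + 2) * (3 ^ m * (m.factorial : ℂ)) *
        ∏ i ∈ range (m + 1), (x + 2 + 2 * m + 2 + i) := by
    rw [oneValue, oneValue, pochProd_even_succ]
    linear_combination pochProd (2 * m + 1) (x + 2) *
      (∏ i ∈ range (m + 1), (x + 2 + 2 * m + 2 + i)) * cConst_even_succ_mul m
  have h3 : oneValue (2 * m + 3) x * ((2 * m + 2).factorial : ℂ) =
      oneValue (2 * m + 2) x * (3 ^ (m + 1) * ((m + 1).factorial : ℂ)) *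
        ∏ i ∈ range (m + 1), (x + 2 * m + 3 + i) := by
    have h := pochProd_odd_eq_even (m + 1) x
    have hc := cConst_odd_mul (m + 1)
    have hp : ∏ i ∈ range (m + 1), (x + 2 * ((m + 1 : ℕ) : ℂ) + 1 + i) =
        ∏ i ∈ range (m + 1), (x + 2 * m + 3 + i) :=
      prod_congr rfl fun t _ => by push_cast; ring
    rw [hp] at h
    rw [show 2 * (m + 1) = 2 * m + 2 by ring] at h hc
    rw [oneValue, oneValue, h]
    linear_combination pochProd (2 * m + 2) x *
      (∏ i ∈ range (m + 1), (x + 2 * m + 3 + i)) * hc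
  have h4 : oneValue (2 * m + 2) x * ∏ i ∈ range (m + 1), (x + 2 * m + 3 + i) =
      oneValue (2 * m + 2) (x + 1) * ∏ i ∈ range (m + 1), (x + 1 + 1 + 3 * i) := by
    have h := pochProd_even_shift (m + 1) x
    have hp : ∏ i ∈ range (m + 1), (x + 2 * ((m + 1 : ℕ) : ℂ) + 1 + i) =
        ∏ i ∈ range (m + 1), (x + 2 * m + 3 + i) :=
      prod_congr rfl fun t _ => by push_cast; ring
    rw [hp, show 2 * (m + 1) = 2 * m + 2 by ring] at h
    rw [oneValue, oneValue, mul_assoc, h, show x + 1 + 1 = x + 2 by ring, mul_assoc]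
  have h5 : (x + (2 * m + 3)) * ∏ i ∈ range (m + 1), (x + 2 + 2 * m + 2 + i) =
      (x + 3 * m + 4) * ∏ i ∈ range (m + 1), (x + 2 * m + 3 + i) := by
    have h := (prod_range_succ' (fun i : ℕ => x + 2 * m + 3 + i) (m + 1)).symm.trans
      (prod_range_succ _ _)
    have hp : ∏ i ∈ range (m + 1), (x + 2 * m + 3 + ((i + 1 : ℕ) : ℂ)) =
        ∏ i ∈ range (m + 1), (x + 2 + 2 * m + 2 + i) :=
      prod_congr rfl fun t _ => by push_cast; ring
    rw [hp] at h
    push_cast at h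
    linear_combination h
  rw [show x + 1 + 1 = x + 2 by ring] at h1
  rw [Nat.factorial_succ (2 * m + 1), Nat.factorial_succ m] at h3
  push_cast at h3
  rw [show x + 1 + 1 = x + 2 by ring] at h4
  refine mul_left_cancel₀ hf ?_
  linear_combination oneValue (2 * m + 1) (x + 2) * h3
    - (x + (2 * m + 3)) * oneValue (2 * m + 2) x * h2
    + (x + 1) * oneValue (2 * m + 2) (x + 1) * h1
    - oneValue (2 * m + 2) x * oneValue (2 * m + 1) (x + 2) * (3 ^ m * (m.factorial : ℂ)) * h5
    - (x + 1) * oneValue (2 * m + 1) (x + 2) * (3 ^ m * (m.factorial : ℂ)) * h4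

/-- Evaluation of the determinants for a sequence `α` with the symmetry of
`(1 - w ^ m) / (1 - w)`, where `w` is a cube root of unity. -/
theorem binomDet_eval {α : ℤ → ℂ} {w : ℂ} (hw : w ^ 3 = 1)
    (hα : ∀ m, α (-m) = -(w ^ (-m) * α m)) (hone : α 1 = 1) (hper : ∀ m, α (m + 3) = α m)
    (m : ℕ) : (∀ x : ℕ, binomDet α (2 * m) 1 x = oneValue (2 * m) x) ∧
      (∀ x : ℕ, binomDet α (2 * m + 1) 1 x = oneValue (2 * m + 1) x) ∧
      ∀ x : ℕ, binomDet α (2 * m) 0 x = (w⁻¹) ^ m * zeroValue m x := by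
  have hw0 : w ≠ 0 := by
    rintro rfl
    norm_num at hw
  have hodd := binomDet_odd_zero hw0 hα
  have hneg (n x : ℕ) : binomDet α n (-1) x = (-w⁻¹) ^ n * binomDet α n 1 x := by
    simpa using binomDet_neg hw0 hα n 1 x
  have htwo (n x : ℕ) : binomDet α n 2 x = (-w⁻¹) ^ n * binomDet α n 1 x := by
    rw [← hneg, binomDet, binomDet]
    congr; ext i j; congr 1
    rw [← hper ((j : ℤ) - i + -1)]
    ring_nf
  induction m with
  | zero =>
    refine ⟨fun x => ?_, fun x => ?_, fun x => ?_⟩ <;>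
      simp [binomDet, oneValue, zeroValue, pochProd, evenProd, cConst, hone]
  | succ m ih =>
    obtain ⟨heven, hodd1, hzero⟩ := ih
    have heven' (x : ℕ) : binomDet α (2 * m + 2) 1 x = oneValue (2 * m + 2) x := by
      have hne : binomDet α (2 * m) 1 (x + 2) ≠ 0 := by
        rw [heven]; exact oneValue_ne_zero _ _
      have h := binomDet_condensation α (2 * m) 1 x hne
      have h' := oneValue_even_condensation m x
      rw [sub_self, hodd, heven, hodd1, hodd1] at h
      rw [heven] at hne
      push_cast at h hne
      have : (2 * m + 1 : ℂ) ≠ 0 := by exact_mod_cast (2 * m).succ_ne_zero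
      refine mul_left_cancel₀ (mul_ne_zero this hne) ?_
      linear_combination h - h'
    have hzero' (x : ℕ) :
        binomDet α (2 * m + 2) 0 x = (w⁻¹) ^ (m + 1) * zeroValue (m + 1) x := by
      have hne : binomDet α (2 * m) 0 (x + 2) ≠ 0 := by
        rw [hzero]; exact mul_ne_zero (pow_ne_zero _ (inv_ne_zero hw0)) (zeroValue_ne_zero _ _)
      have h := binomDet_condensation α (2 * m) 0 x hne
      have h' := zeroValue_condensation m x
      rw [zero_add, zero_sub, hneg, hodd, hodd1, hzero, pow_succ, pow_mul, neg_sq] at h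
      rw [hzero] at hne
      push_cast at h hne
      have : (2 * m + 1 : ℂ) ≠ 0 := by exact_mod_cast (2 * m).succ_ne_zero
      refine mul_left_cancel₀ (mul_ne_zero this hne) ?_
      rw [← pow_mul] at h
      linear_combination h - (w⁻¹) ^ (2 * m + 1) * h'
    refine ⟨heven', fun x => ?_, hzero'⟩
    have hne : binomDet α (2 * m + 1) 1 (x + 2) ≠ 0 := by
      rw [hodd1]; exact oneValue_ne_zero _ _
    have h := binomDet_condensation α (2 * m + 1) 1 x hne
    have h' := oneValue_odd_condensation m x
    rw [show (1 : ℤ) + 1 = 2 by norm_num, sub_self, htwo, hodd1, heven', heven', heven',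
      hzero'] at h
    rw [hodd1] at hne
    push_cast at h hne
    have hu : (-w⁻¹) ^ (2 * m + 2) * (w⁻¹) ^ (m + 1) = 1 := by
      rw [show 2 * m + 2 = 2 * (m + 1) by ring, pow_mul, neg_sq, ← mul_pow,
        show w⁻¹ ^ 2 * w⁻¹ = (w ^ 3)⁻¹ by rw [inv_pow, ← mul_inv, ← pow_succ], hw, inv_one,
        one_pow]
    have : (2 * m + 2 : ℂ) ≠ 0 := by exact_mod_cast (2 * m + 1).succ_ne_zero
    refine mul_left_cancel₀ (mul_ne_zero this hne) ?_
    rw [show 2 * (m + 1) + 1 = 2 * m + 3 by ring]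
    linear_combination h - h' -
      (x + 1) * oneValue (2 * m + 2) (x + 1) * zeroValue (m + 1) (x + 1) * hu

theorem aF_eq {q : ℂ} (hq0 : q ≠ 0) (hq1 : 1 + q ≠ 0) (m : ℤ) :
    aF ℂ q m = (1 - (-q) ^ m) / (1 + q) := by
  have hneg (N : ℕ) : -∑ l ∈ range N, (-q) ^ (-(l + 1 : ℤ)) =
      (1 - (-q) ^ (-(N : ℤ))) / (1 + q) := by
    induction N with
    | zero => simp
    | succ N ih =>
      rw [sum_range_succ, neg_add, ih]
      have h : (-q) ^ (-(N : ℤ)) = (-q) ^ (-(N + 1 : ℤ)) * (-q) := by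
        rw [← zpow_add_one₀ (neg_ne_zero.mpr hq0)]
        ring_nf
      rw [h]
      push_cast
      field_simp
      ring
  rw [aF]
  split_ifs with h
  · obtain ⟨N, rfl⟩ := Int.eq_ofNat_of_zero_le h.le
    rw [Int.toNat_natCast, zpow_natCast, geom_sum_eq (fun h => hq1 (by linear_combination -h)),
      div_eq_div_iff (fun h => hq1 (by linear_combination -h)) hq1]
    ring
  · obtain ⟨N, hN⟩ := Int.eq_ofNat_of_zero_le (a := -m) (by omega)
    rw [hN, Int.toNat_natCast, hneg, ← hN, neg_neg]

theorem eval_dF (n : ℕ) (k : ℤ) (q : ℂ) (x : ℕ) :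
    (dF ℂ n k q).eval (x : ℂ) = binomDet (aF ℂ q) n k x := by
  rw [dF, binomDet, ← coe_evalRingHom, RingHom.map_det]
  congr 1
  ext i j
  simp only [RingHom.mapMatrix_apply, Matrix.map_apply, Matrix.of_apply, coe_evalRingHom,
    eval_mul, eval_C, binomP, eval_prod, eval_sub, eval_add, eval_X, eval_natCast]
  congr 1
  rw [Nat.cast_choose_eq_descPochhammer_div, descPochhammer_eval_eq_prod_range]
  push_cast
  ring

theorem eval_poch (y : ℂ[X]) (m : ℤ) (x : ℂ) :
    (poch y m).eval x = ∏ t ∈ range m.toNat, (y.eval x + t) := by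
  simp [poch, eval_prod]

theorem eq_of_eval_natCast {p r : ℂ[X]} (h : ∀ x : ℕ, p.eval (x : ℂ) = r.eval (x : ℂ)) :
    p = r := by
  refine eq_of_infinite_eval_eq p r ((Set.infinite_range_of_injective
    (Nat.cast_injective (R := ℂ))).mono ?_)
  rintro _ ⟨x, rfl⟩
  exact h x

/-- the evaluations of d_{n,k}(x,q) for q a primitive sixth root of unity. -/
theorem statement15 (q : ℂ) (hq : IsPrimitiveRoot q 6) (k : ℤ) (n : ℕ) (hn : 1 ≤ n) :
    (dF ℂ (2 * n + 1) (3 * k) q = 0) ∧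
    (dF ℂ (2 * n) (3 * k) q =
      Polynomial.C ((-1 : ℂ) ^ n * q ^ (-(n : ℤ)) * cConst (2 * n)) *
      (∏ i ∈ Finset.range n, (Polynomial.X + Polynomial.C (1 + 3 * (i : ℂ)))) *
      ∏ i ∈ Finset.range (n - 1),
        poch (Polynomial.X + Polynomial.C (3 * ((i : ℂ) + 1))) (2 * ((n : ℤ) - (i + 1)))) ∧
    (dF ℂ n (3 * k + 1) q =
      Polynomial.C (cConst n) *
      ∏ i ∈ Finset.range ((((n : ℤ) - 2) / 2 + 1).toNat),
        poch (Polynomial.X + Polynomial.C (2 + 3 * (i : ℂ))) ((n : ℤ) - 1 - 2 * i)) ∧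
    (dF ℂ n (3 * k + 2) q = Polynomial.C (q ^ (-(n : ℤ))) * dF ℂ n (3 * k + 1) q) := by
  have hq0 : q ≠ 0 := hq.ne_zero (by norm_num)
  have hq1 : 1 + q ≠ 0 := fun h => hq.pow_ne_one_of_pos_of_lt (l := 2) (by norm_num) (by norm_num)
    (by rw [eq_neg_of_add_eq_zero_right h]; norm_num)
  have hw : (-q) ^ 3 = 1 := by
    have h6 := hq.pow_eq_one
    have h3 : q ^ 3 ≠ 1 := hq.pow_ne_one_of_pos_of_lt (by norm_num) (by norm_num)
    have h : (q ^ 3 - 1) * (q ^ 3 + 1) = 0 := by linear_combination h6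
    rcases mul_eq_zero.mp h with h | h
    · exact absurd (sub_eq_zero.mp h) h3
    · linear_combination -h
  have hper (m l : ℤ) : aF ℂ q (m + 3 * l) = aF ℂ q m := by
    rw [aF_eq hq0 hq1, aF_eq hq0 hq1, zpow_add₀ (neg_ne_zero.mpr hq0), zpow_mul,
      zpow_ofNat, hw, one_zpow, mul_one]
  have hα (m : ℤ) : aF ℂ q (-m) = -((-q) ^ (-m) * aF ℂ q m) := by
    rw [aF_eq hq0 hq1, aF_eq hq0 hq1, zpow_neg]
    have := zpow_ne_zero m (neg_ne_zero.mpr hq0)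
    field_simp
    ring
  have hone : aF ℂ q 1 = 1 := by simp [aF]
  have hdet := binomDet_eval hw hα hone fun m => hper m 1
  have hone' (n x : ℕ) : binomDet (aF ℂ q) n 1 x = oneValue n x := by
    obtain ⟨m, rfl | rfl⟩ := n.even_or_odd'
    · exact (hdet m).1 x
    · exact (hdet m).2.1 x
  have hshift (n : ℕ) (l : ℤ) : dF ℂ n (3 * k + l) q = dF ℂ n l q := by
    simp only [dF]
    congr; ext1 i; ext1 j
    rw [← hper ((j : ℤ) - i + l) k]
    ring_nf
  have hw0 : -q ≠ 0 := neg_ne_zero.mpr hq0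
  refine ⟨?_, ?_, ?_, ?_⟩
  · rw [← add_zero (3 * k), hshift]
    refine eq_of_eval_natCast fun x => ?_
    rw [eval_dF, eval_zero, binomDet_odd_zero hw0 hα]
  · rw [← add_zero (3 * k), hshift]
    refine eq_of_eval_natCast fun x => ?_
    rw [eval_dF, (hdet n).2.2]
    simp only [eval_mul, eval_C, eval_prod, eval_poch, eval_add, eval_X, zeroValue, evenProd]
    have hu : (-1 : ℂ) ^ n * q ^ (-(n : ℤ)) = (-q)⁻¹ ^ n := by
      rw [zpow_neg, zpow_natCast, ← inv_pow, ← mul_pow, inv_neg, neg_one_mul]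
    have h2 : ∏ i ∈ range (n - 1), ∏ t ∈ range (2 * (n - 1 - i)), ((x : ℂ) + 3 * (i + 1) + t) =
        ∏ i ∈ range (n - 1), ∏ t ∈ range (2 * ((n : ℤ) - (i + 1))).toNat,
          ((x : ℂ) + 3 * (i + 1) + t) :=
      prod_congr rfl fun i _ => by
        rw [show (2 * ((n : ℤ) - (i + 1))).toNat = 2 * (n - 1 - i) by omega]
    rw [hu, h2]
    simp only [mul_assoc, add_assoc]
  · rw [hshift]
    refine eq_of_eval_natCast fun x => ?_
    rw [eval_dF, hone', show (((n : ℤ) - 2) / 2 + 1).toNat = n / 2 by omega]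
    simp only [eval_mul, eval_C, eval_prod, eval_poch, eval_add, eval_X, oneValue, pochProd]
    congr 1
    refine prod_congr rfl fun i _ => ?_
    rw [show ((n : ℤ) - 1 - 2 * i).toNat = n - 1 - 2 * i by omega]
    simp only [add_assoc]
  · rw [hshift, hshift]
    refine eq_of_eval_natCast fun x => ?_
    have h := binomDet_neg hw0 hα n 1 x
    rw [eval_mul, eval_C, eval_dF, eval_dF]
    have h2 : dF ℂ n 2 q = dF ℂ n (-1) q := by
      simp only [dF]
      congr; ext1 i; ext1 j
      rw [← hper ((j : ℤ) - i + -1) 1]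
      ring_nf
    rw [← eval_dF, h2, eval_dF, h, zpow_neg_one, inv_neg, neg_neg, zpow_neg, zpow_natCast, inv_pow]

end
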